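/- For every permutation w of {1,…,n} and every δ ∈ GPDs(w), the degree in the variable A of the weight wt(δ) equals n² minus the number of blank tiles of δ, and this degree is at most n² − ℓ(w), where ℓ(w) is the number of inversions of w. Equality holds if and only if δ is bumpless-reduced, i.e., δ has no bump tiles and no two pipes of δ cross each other at more than one tile. -/

import Mathlib

open scoped Classical

namespace GPDpaper

/-- Raw data of a pipe-filling of the `n × n` grid: `d.1 i j` is the (optional) pipe label on
the vertical edge at row `i`, West of column `j` (so `d.1 i 0` is on the West boundary and
`d.1 i (Fin.last n)` on the East boundary); `d.2 i j` is the label on the horizontal edge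
North of row `i` in column `j` (so `d.2 0 j` is on the North boundary and
`d.2 (Fin.last n) j` on the South boundary).  Rows are numbered from the top. -/
abbrev Pipes (n : ℕ) :=
  (Fin n → Fin (n+1) → Option (Fin n)) × (Fin (n+1) → Fin n → Option (Fin n))

variable {n : ℕ}

/-- Label on the West edge of square `(i,j)`. -/
def We (d : Pipes n) (i j : Fin n) : Option (Fin n) := d.1 i j.castSucc
/-- Label on the East edge of square `(i,j)`. -/
def Ea (d : Pipes n) (i j : Fin n) : Option (Fin n) := d.1 i j.succ
/-- Label on the North edge of square `(i,j)`. -/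
def No (d : Pipes n) (i j : Fin n) : Option (Fin n) := d.2 i.castSucc j
/-- Label on the South edge of square `(i,j)`. -/
def So (d : Pipes n) (i j : Fin n) : Option (Fin n) := d.2 i.succ j

/-- The local condition making `d` a generic pipe dream: at each square, the pair of labels
leaving through the East and North edges is either `(W,S)` (cross/horizontal/vertical/blank
tile) or `(S,W)` (bump/elbow/blank tile); moreover two edges of the same square never carry
the same pipe label. -/
def IsValid (d : Pipes n) : Prop :=
  ∀ i j : Fin n,
    ((Ea d i j, No d i j) = (We d i j, So d i j) ∨
     (Ea d i j, No d i j) = (So d i j, We d i j)) ∧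
    (We d i j = So d i j → We d i j = none)

/-- The seven generic pipe dream tiles. -/
inductive Tile where
  | cross | bump | nw | se | horiz | vert | blank
deriving DecidableEq

/-- The tile of a pipe-filling at square `(i,j)`. -/
def tile (d : Pipes n) (i j : Fin n) : Tile :=
  match We d i j, So d i j with
  | some a, some _ => if Ea d i j = some a then .cross else .bump
  | some _, none => if No d i j = none then .horiz else .nw
  | none, some _ => if No d i j = none then .se else .vert
  | none, none => .blank

/-- `d` is a generic pipe dream for the permutation `w`: it is locally valid, the pipe
entering the West boundary in row `i` is labelled `i`, no pipes meet the East and South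
boundaries, and the pipe exiting the North boundary in column `j` is labelled `w⁻¹(j)`. -/
def IsGPDof (w : Equiv.Perm (Fin n)) (d : Pipes n) : Prop :=
  IsValid d ∧
  (∀ i : Fin n, d.1 i 0 = some i) ∧
  (∀ i : Fin n, d.1 i (Fin.last n) = none) ∧
  (∀ j : Fin n, d.2 (Fin.last n) j = none) ∧
  (∀ j : Fin n, d.2 0 j = some (w.symm j))

/-- Number of tiles of `d` of a given type. -/
noncomputable def tileCount (d : Pipes n) (t : Tile) : ℕ :=
  (Finset.univ.filter (fun p : Fin n × Fin n => tile d p.1 p.2 = t)).card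

/-- The pipes labelled `p` and `q` cross at the tile `(i,j)`. -/
def CrossesAt (d : Pipes n) (p q : Fin n) (i j : Fin n) : Prop :=
  tile d i j = .cross ∧
  ((We d i j = some p ∧ So d i j = some q) ∨ (We d i j = some q ∧ So d i j = some p))

/-- The number of tiles at which the pipes labelled `p` and `q` cross. -/
noncomputable def crossCount (d : Pipes n) (p q : Fin n) : ℕ :=
  (Finset.univ.filter (fun ij : Fin n × Fin n => CrossesAt d p q ij.1 ij.2)).card

/-- No two pipes of `d` cross each other at more than one tile. -/
def NoDoubleCross (d : Pipes n) : Prop := ∀ p q : Fin n, crossCount d p q ≤ 1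

/-- Number of inversions (Coxeter length) of a permutation. -/
def invCount (w : Equiv.Perm (Fin n)) : ℕ :=
  (Finset.univ.filter (fun p : Fin n × Fin n => p.1 < p.2 ∧ w p.2 < w p.1)).card

/-- Classic pipe dream (in 1-indexed terms: crosses and bumps for `i+j ≤ n`, NW-elbows on the
antidiagonal `i+j = n+1`, blanks below, and no two pipes crossing twice). -/
def IsClassic (d : Pipes n) : Prop :=
  (∀ i j : Fin n, (i : ℕ) + (j : ℕ) + 2 ≤ n → tile d i j = .cross ∨ tile d i j = .bump) ∧
  (∀ i j : Fin n, (i : ℕ) + (j : ℕ) + 2 = n + 1 → tile d i j = .nw) ∧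
  (∀ i j : Fin n, (i : ℕ) + (j : ℕ) + 2 > n + 1 → tile d i j = .blank) ∧
  NoDoubleCross d

/-- Bumpless-reduced: no bump tiles and no two pipes crossing twice. -/
def IsBumplessReduced (d : Pipes n) : Prop :=
  (∀ i j : Fin n, tile d i j ≠ .bump) ∧ NoDoubleCross d

end GPDpaper

namespace GPDpaper

/-- Variables `x₁,…,xₙ, y₁,…,yₙ, A, B`. -/
inductive Var (n : ℕ) where
  | x (i : Fin n) | y (j : Fin n) | A | B

variable {n : ℕ}

/-- The weight of a generic pipe dream, in `ℤ[x₁,…,xₙ,y₁,…,yₙ,A,B]`. -/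
noncomputable def wt (d : Pipes n) : MvPolynomial (Var n) ℤ :=
  ∏ i : Fin n, ∏ j : Fin n,
    match tile d i j with
    | .cross | .horiz | .vert =>
        MvPolynomial.X Var.A + MvPolynomial.X (Var.x i) - MvPolynomial.X (Var.y j)
    | .blank =>
        MvPolynomial.X Var.B - MvPolynomial.X (Var.x i) + MvPolynomial.X (Var.y j)
    | _ => MvPolynomial.X Var.A + MvPolynomial.X Var.B

/-- The generic pipe dream polynomial `G_w`. -/
noncomputable def G (w : Equiv.Perm (Fin n)) : MvPolynomial (Var n) ℤ :=
  ∑ d ∈ Finset.univ.filter (fun d : Pipes n => IsGPDof w d), wt d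

/-- Indicator of a label. -/
def ind (x : Option (Fin n)) (p : Fin n) : ℤ := if x = some p then 1 else 0

/-- Indicator of being occupied. -/
def occ (x : Option (Fin n)) : ℤ := if x = none then 0 else 1

lemma sum_tele (f : Fin (n+1) → ℤ) :
    ∑ j : Fin n, (f j.castSucc - f j.succ) = f 0 - f (Fin.last n) := by
  have h1 := Fin.sum_univ_castSucc f
  have h2 := Fin.sum_univ_succ f
  rw [Finset.sum_sub_distrib]
  linarith

lemma green (h : Fin n → Fin (n+1) → ℤ) (v : Fin (n+1) → Fin n → ℤ) :
    ∑ i : Fin n, ∑ j : Fin n,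
      (h i j.castSucc + v i.succ j - v i.castSucc j - h i j.succ) =
    ∑ i, h i 0 + ∑ j, v (Fin.last n) j - ∑ j, v 0 j - ∑ i, h i (Fin.last n) := by
  have e : ∀ i j : Fin n, h i j.castSucc + v i.succ j - v i.castSucc j - h i j.succ =
      (h i j.castSucc - h i j.succ) - (v i.castSucc j - v i.succ j) := fun i j => by ring
  simp only [e, Finset.sum_sub_distrib (f := fun j : Fin n => h _ j.castSucc - h _ j.succ)]
  rw [Finset.sum_sub_distrib]
  rw [Finset.sum_comm (f := fun i j : Fin n => v i.castSucc j - v i.succ j)]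
  have a1 : ∀ i : Fin n, ∑ j : Fin n, (h i j.castSucc - h i j.succ) = h i 0 - h i (Fin.last n) :=
    fun i => sum_tele (h i)
  have a2 : ∀ j : Fin n, ∑ i : Fin n, (v i.castSucc j - v i.succ j) = v 0 j - v (Fin.last n) j :=
    fun j => sum_tele (fun i => v i j)
  simp only [a1, a2, Finset.sum_sub_distrib]
  ring

lemma ind_cons {d : Pipes n} (hd : IsValid d) (p i j : Fin n) :
    ind (We d i j) p + ind (So d i j) p = ind (No d i j) p + ind (Ea d i j) p := by
  rcases (hd i j).1 with h | h <;> simp only [Prod.mk.injEq] at h <;> rw [h.1, h.2] <;> ring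

/-- Indicator that the pipe `p` passes North-West of a vertex. -/
def R (d : Pipes n) (p : Fin n) (i j : Fin (n+1)) : ℤ :=
  (if p.castSucc < i then 1 else 0) +
    ∑ l : Fin n, if l.castSucc < j then ind (d.2 i l) p else 0

lemma R_east (d : Pipes n) (p : Fin n) (i : Fin (n+1)) (j : Fin n) :
    R d p i j.succ = R d p i j.castSucc + ind (d.2 i j) p := by
  have e : ∀ l : Fin n, (if l.castSucc < j.succ then ind (d.2 i l) p else 0) =
      (if l.castSucc < j.castSucc then ind (d.2 i l) p else 0) +
      (if l = j then ind (d.2 i l) p else 0) := by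
    intro l
    simp only [Fin.lt_def, Fin.val_castSucc, Fin.val_succ, Fin.ext_iff]
    split_ifs <;> first | omega | simp
  unfold R
  simp only [e, Finset.sum_add_distrib]
  simp
  ring

lemma R_south {w : Equiv.Perm (Fin n)} {d : Pipes n} (hd : IsGPDof w d) (p : Fin n)
    (i : Fin n) (j : Fin (n+1)) :
    R d p i.succ j = R d p i.castSucc j + ind (d.1 i j) p := by
  induction j using Fin.induction with
  | zero =>
    simp only [R, hd.2.1 i, ind, Option.some.injEq]
    simp only [Fin.lt_def, Fin.val_castSucc, Fin.val_succ, Fin.ext_iff]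
    simp
    split_ifs <;> omega
  | succ j ih =>
    rw [R_east, R_east, ih]
    have := ind_cons hd.1 p i j
    simp only [We, Ea, No, So] at this
    linarith

/-- number of crossings with `p` from the West and `q` from the South. -/
noncomputable def C (d : Pipes n) (p q : Fin n) : ℕ :=
  ∑ i : Fin n, ∑ j : Fin n,
    if tile d i j = .cross ∧ We d i j = some p ∧ So d i j = some q then 1 else 0

lemma curl {d : Pipes n} (hd : IsValid d) {p q : Fin n} (hpq : p ≠ q) (i j : Fin n) :
    ind (We d i j) p * ind (So d i j) q - ind (No d i j) p * ind (Ea d i j) q =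
    (if tile d i j = .cross ∧ We d i j = some p ∧ So d i j = some q then 1 else 0) -
    (if tile d i j = .cross ∧ We d i j = some q ∧ So d i j = some p then 1 else 0) := by
  obtain ⟨h, h'⟩ := hd i j
  unfold tile
  rcases hW : We d i j with _ | a <;> rcases hS : So d i j with _ | b <;>
    rw [hW, hS] at h h' <;> simp only [Prod.mk.injEq] at h <;>
    rcases h with h | h <;> rw [h.1, h.2] <;> simp_all [ind] <;> 
    split_ifs <;> simp_all

lemma C_sub {w : Equiv.Perm (Fin n)} {d : Pipes n} (hd : IsGPDof w d) {p q : Fin n}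
    (hpq : p ≠ q) :
    (C d p q : ℤ) - C d q p = (if p < q then 1 else 0) - (if w p < w q then 1 else 0) := by
  have g := green (fun i j => R d p i.castSucc j * ind (d.1 i j) q)
    (fun i j => R d p i j.castSucc * ind (d.2 i j) q)
  have e : ∀ i j : Fin n, R d p i.castSucc j.castSucc * ind (d.1 i j.castSucc) q +
      R d p i.succ j.castSucc * ind (d.2 i.succ j) q -
      R d p i.castSucc j.castSucc * ind (d.2 i.castSucc j) q -
      R d p i.castSucc j.succ * ind (d.1 i j.succ) q =
      (if tile d i j = .cross ∧ We d i j = some p ∧ So d i j = some q then 1 else 0) -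
      (if tile d i j = .cross ∧ We d i j = some q ∧ So d i j = some p then 1 else 0) := by
    intro i j
    rw [← curl hd.1 hpq, R_south hd, R_east]
    have := ind_cons hd.1 q i j
    simp only [We, Ea, No, So] at this ⊢
    linear_combination (R d p i.castSucc j.castSucc) * this
  simp only [e, Finset.sum_sub_distrib] at g
  have hC : ∀ p q, (C d p q : ℤ) = ∑ i : Fin n, ∑ j : Fin n,
    if tile d i j = .cross ∧ We d i j = some p ∧ So d i j = some q then 1 else 0 := by
    intro p q; unfold C; push_cast; rfl
  rw [hC, hC, g]
  have b1 : ∀ i : Fin n, R d p i.castSucc 0 * ind (d.1 i 0) q = 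
      if i = q then (if p < q then 1 else 0) else 0 := by
    intro i
    rw [hd.2.1 i]
    simp only [R, ind, Option.some.injEq]
    by_cases h : i = q
    · subst h; simp
    · simp [h]
  have b2 : ∀ j : Fin n, R d p 0 j.castSucc * ind (d.2 0 j) q = 
      if j = w q then (if w p < w q then 1 else 0) else 0 := by
    intro j
    have key : ∀ l : Fin n, w.symm l = p ↔ l = w p := fun l => by
      rw [Equiv.symm_apply_eq]
    have key' : ∀ l : Fin n, w.symm l = q ↔ l = w q := fun l => by
      rw [Equiv.symm_apply_eq]
    simp only [R, ind, Option.some.injEq, hd.2.2.2.2, key, key']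
    by_cases h : j = w q
    · subst h
      simp [← ite_and, and_comm (b := _ = w p)]
      have e5 : ∀ x : Fin n, (x = w p ∧ x < w q) ↔ (x = w p ∧ w p < w q) := fun x => ⟨fun h => ⟨h.1, h.1 ▸ h.2⟩, fun h => ⟨h.1, h.1 ▸ h.2⟩⟩
      simp only [e5]
      by_cases h6 : w p < w q <;> simp [h6, Finset.filter_eq']
    · simp [h]
  simp only [b1, b2, hd.2.2.1, hd.2.2.2.1]
  simp [ind]

lemma occ_sum {w : Equiv.Perm (Fin n)} {d : Pipes n} (hd : IsGPDof w d) :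
    ∑ i : Fin n, ∑ j : Fin n, (occ (We d i j) + occ (So d i j)) = (n : ℤ) ^ 2 := by
  have g := green (fun i j => ((i : ℕ) - (j : ℕ) : ℤ) * occ (d.1 i j))
    (fun i j => ((i : ℕ) - (j : ℕ) - 1 : ℤ) * occ (d.2 i j))
  simp only [hd.2.1, hd.2.2.1, hd.2.2.2.1, hd.2.2.2.2] at g
  have e : ∀ i j : Fin n, ((i : ℕ) - (j.castSucc : ℕ) : ℤ) * occ (d.1 i j.castSucc) +
      ((i.succ : ℕ) - (j : ℕ) - 1 : ℤ) * occ (d.2 i.succ j) -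
      ((i.castSucc : ℕ) - (j : ℕ) - 1 : ℤ) * occ (d.2 i.castSucc j) -
      ((i : ℕ) - (j.succ : ℕ) : ℤ) * occ (d.1 i j.succ) = occ (We d i j) + occ (So d i j) := by
    intro i j
    rcases (hd.1 i j).1 with h | h <;> simp only [Prod.mk.injEq] at h <;>
      simp only [We, Ea, No, So] at h ⊢ <;> rw [h.1, h.2] <;>
      simp only [Fin.val_castSucc, Fin.val_succ] <;> push_cast <;> ring
  simp only [e] at g
  rw [g]
  simp only [occ]
  simp
  have s : ∑ x : Fin n, ((x : ℕ) : ℤ) * 2 = n * (n - 1) := by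
    rw [← Finset.sum_mul, Fin.sum_univ_eq_sum_range (fun k => (k : ℤ))]
    have := Finset.sum_range_id_mul_two n
    rcases n with _ | m
    · simp
    · have h2 := congrArg (fun k : ℕ => (k : ℤ)) this
      push_cast at h2 ⊢
      simpa using h2
  rw [← Finset.sum_mul] at s
  linarith

lemma tileCount_sum (d : Pipes n) (t : Tile) :
    tileCount d t = ∑ i : Fin n, ∑ j : Fin n, if tile d i j = t then 1 else 0 := by
  unfold tileCount
  rw [Finset.card_filter, ← Finset.univ_product_univ, Finset.sum_product]

lemma blank_eq {w : Equiv.Perm (Fin n)} {d : Pipes n} (hd : IsGPDof w d) :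
    tileCount d .blank = tileCount d .cross + tileCount d .bump := by
  have key : ∀ i j : Fin n, (if tile d i j = .blank then 1 else 0 : ℤ) =
      (if tile d i j = .cross then 1 else 0) + (if tile d i j = .bump then 1 else 0) + 1 -
      (occ (We d i j) + occ (So d i j)) := by
    intro i j
    unfold tile
    rcases hW : We d i j with _ | a <;> rcases hS : So d i j with _ | b <;> simp [occ] <;>
      split_ifs <;> simp_all
  have h := occ_sum hd
  zify
  simp only [tileCount_sum]
  push_cast
  simp only [key, Finset.sum_sub_distrib, Finset.sum_add_distrib] at h ⊢
  rw [h]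
  simp
  ring

lemma cross_sum (d : Pipes n) : tileCount d .cross = ∑ p, ∑ q, C d p q := by
  unfold C
  rw [tileCount_sum]
  have : ∀ i j : Fin n, (if tile d i j = .cross then 1 else 0) = ∑ p : Fin n, ∑ q : Fin n,
    if tile d i j = .cross ∧ We d i j = some p ∧ So d i j = some q then 1 else 0 := by
    intro i j
    by_cases h : tile d i j = .cross
    · unfold tile at h
      rcases hW : We d i j with _ | a <;> rcases hS : So d i j with _ | b <;>
        simp only [hW, hS] at h
      · simp at h
      · split_ifs at h
      · split_ifs at h
      · have h2 : tile d i j = .cross := by simp only [tile, hW, hS]; exact h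
        simp [h2, ite_and]
    · simp [h]
  simp only [this]
  calc _ = ∑ i : Fin n, ∑ p : Fin n, ∑ j : Fin n, ∑ q : Fin n, _ :=
        Finset.sum_congr rfl fun i _ => Finset.sum_comm
    _ = ∑ p : Fin n, ∑ i : Fin n, ∑ j : Fin n, ∑ q : Fin n, _ := Finset.sum_comm
    _ = ∑ p : Fin n, ∑ i : Fin n, ∑ q : Fin n, ∑ j : Fin n, _ :=
        Finset.sum_congr rfl fun p _ => Finset.sum_congr rfl fun i _ => Finset.sum_comm
    _ = _ := Finset.sum_congr rfl fun p _ => Finset.sum_comm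

lemma crossCount_eq {d : Pipes n} {p q : Fin n} (hpq : p ≠ q) :
    crossCount d p q = C d p q + C d q p := by
  unfold crossCount C
  rw [Finset.card_filter, ← Finset.univ_product_univ, Finset.sum_product]
  simp only [← Finset.sum_add_distrib]
  refine Finset.sum_congr rfl fun i _ => Finset.sum_congr rfl fun j _ => ?_
  unfold CrossesAt
  by_cases h : tile d i j = .cross <;> simp [h]
  split_ifs <;> simp_all

lemma crossesAt_self {d : Pipes n} (hd : IsValid d) (p i j : Fin n) : ¬ CrossesAt d p p i j := by
  rintro ⟨_, h⟩
  have h2 : We d i j = some p ∧ So d i j = some p := by tauto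
  have := (hd i j).2 (by rw [h2.1, h2.2])
  rw [h2.1] at this
  simp at this

lemma C_self {d : Pipes n} (hd : IsValid d) (p : Fin n) : C d p p = 0 := by
  unfold C
  refine Finset.sum_eq_zero fun i _ => Finset.sum_eq_zero fun j _ => ?_
  rw [if_neg]
  rintro ⟨h1, h2⟩
  exact crossesAt_self hd p i j ⟨h1, Or.inl h2⟩

lemma C_inv {w : Equiv.Perm (Fin n)} {d : Pipes n} (hd : IsGPDof w d) {p q : Fin n}
    (hpq : p < q) : C d p q = C d q p + if w q < w p then 1 else 0 := by
  have h := C_sub hd hpq.ne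
  have hw : w p ≠ w q := fun e => hpq.ne (w.injective e)
  rw [if_pos hpq] at h
  rcases lt_or_gt_of_ne hw with h1 | h1
  · rw [if_pos h1] at h; rw [if_neg h1.not_gt]; omega
  · rw [if_neg h1.not_gt] at h; rw [if_pos h1]; omega

lemma cross_eq {w : Equiv.Perm (Fin n)} {d : Pipes n} (hd : IsGPDof w d) :
    tileCount d .cross = invCount w + 2 * ∑ p, ∑ q, if p < q then C d q p else 0 := by
  rw [cross_sum]
  have e : ∀ p q, C d p q = (if p < q then C d p q else 0) + (if q < p then C d p q else 0) := by
    intro p q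
    rcases lt_trichotomy p q with h | h | h
    · simp [h, h.not_gt]
    · subst h; simp [C_self hd.1]
    · simp [h, h.not_gt]
  have e2 : ∀ p q, (if p < q then C d p q else 0) = (if p < q then C d q p else 0) +
      (if p < q ∧ w q < w p then 1 else 0) := by
    intro p q
    by_cases h : p < q
    · simp [h, C_inv hd h]
    · simp [h]
  have e3 : invCount w = ∑ p, ∑ q, if p < q ∧ w q < w p then 1 else 0 := by
    unfold invCount
    rw [Finset.card_filter, ← Finset.univ_product_univ, Finset.sum_product]
  calc ∑ p, ∑ q, C d p q
      = ∑ p, ∑ q, ((if p < q then C d p q else 0) + (if q < p then C d p q else 0)) :=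
        Finset.sum_congr rfl fun p _ => Finset.sum_congr rfl fun q _ => e p q
    _ = ∑ p, ∑ q, (if p < q then C d p q else 0) + ∑ p, ∑ q, (if q < p then C d p q else 0) := by
        simp only [Finset.sum_add_distrib]
    _ = ∑ p, ∑ q, (if p < q then C d p q else 0) + ∑ p, ∑ q, (if p < q then C d q p else 0) := by
        congr 1; exact Finset.sum_comm
    _ = _ := by
        simp only [e2, Finset.sum_add_distrib]
        rw [e3]; ring

lemma degree_eq (d : Pipes n) :
    MvPolynomial.degreeOf Var.A (wt d) + tileCount d .blank = n ^ 2 := by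
  have hX : ∀ v : Var n, v ≠ Var.A →
      MvPolynomial.degreeOf Var.A (MvPolynomial.X v : MvPolynomial (Var n) ℤ) = 0 :=
    fun v hv => MvPolynomial.degreeOf_X_of_ne hv.symm
  have h1 : ∀ q : MvPolynomial (Var n) ℤ, MvPolynomial.degreeOf Var.A q = 0 →
      MvPolynomial.degreeOf Var.A (MvPolynomial.X Var.A + q) = 1 := by
    intro q hq
    rw [MvPolynomial.degreeOf_add_eq_of_degreeOf_lt] <;>
      simp [MvPolynomial.degreeOf_X_self, hq]
  have hsub : ∀ i j : Fin n, MvPolynomial.degreeOf Var.A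
      (MvPolynomial.X (Var.x i) - MvPolynomial.X (Var.y j) : MvPolynomial (Var n) ℤ) = 0 := by
    intro i j
    have := MvPolynomial.degreeOf_sub_le (Var.A : Var n)
      (MvPolynomial.X (Var.x i) : MvPolynomial (Var n) ℤ) (MvPolynomial.X (Var.y j))
    rw [hX _ (by simp), hX _ (by simp)] at this
    simpa using this
  have h0 : ∀ i j : Fin n, MvPolynomial.degreeOf Var.A
      (MvPolynomial.X Var.B - MvPolynomial.X (Var.x i) + MvPolynomial.X (Var.y j) :
        MvPolynomial (Var n) ℤ) = 0 := by
    intro i j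
    have a := MvPolynomial.degreeOf_add_le (Var.A : Var n)
      (MvPolynomial.X Var.B - MvPolynomial.X (Var.x i) : MvPolynomial (Var n) ℤ)
      (MvPolynomial.X (Var.y j))
    have := MvPolynomial.degreeOf_sub_le (Var.A : Var n)
      (MvPolynomial.X Var.B : MvPolynomial (Var n) ℤ) (MvPolynomial.X (Var.x i))
    rw [hX _ (by simp), hX _ (by simp)] at this
    rw [hX (Var.y j) (by simp)] at a
    simp at this a
    omega
  have hne : ∀ i j : Fin n,
      (MvPolynomial.X Var.B - MvPolynomial.X (Var.x i) + MvPolynomial.X (Var.y j) :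
        MvPolynomial (Var n) ℤ) ≠ 0 := by
    intro i j h
    have := congrArg (MvPolynomial.eval (fun v : Var n => match v with
      | .B => (1 : ℤ) | _ => 0)) h
    simp at this
  have hne1 : ∀ q : MvPolynomial (Var n) ℤ, MvPolynomial.degreeOf Var.A q = 1 → q ≠ 0 := by
    rintro q hq rfl
    simp at hq
  let F : Fin n → Fin n → MvPolynomial (Var n) ℤ := fun i j =>
    match tile d i j with
    | .cross | .horiz | .vert =>
        MvPolynomial.X Var.A + MvPolynomial.X (Var.x i) - MvPolynomial.X (Var.y j)
    | .blank =>
        MvPolynomial.X Var.B - MvPolynomial.X (Var.x i) + MvPolynomial.X (Var.y j)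
    | _ => MvPolynomial.X Var.A + MvPolynomial.X Var.B
  have hA : ∀ i j : Fin n, MvPolynomial.degreeOf Var.A
      (MvPolynomial.X Var.A + MvPolynomial.X (Var.x i) - MvPolynomial.X (Var.y j) :
        MvPolynomial (Var n) ℤ) = 1 := fun i j => by
    rw [add_sub_assoc]; exact h1 _ (hsub i j)
  have hB : MvPolynomial.degreeOf Var.A
      (MvPolynomial.X Var.A + MvPolynomial.X Var.B : MvPolynomial (Var n) ℤ) = 1 :=
    h1 _ (hX _ (by simp))
  have hF : ∀ i j, F i j ≠ 0 ∧
      MvPolynomial.degreeOf Var.A (F i j) + (if tile d i j = .blank then 1 else 0) = 1 := by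
    intro i j
    simp only [F]
    rcases tile d i j <;> simp only [hA, hB, h0] <;>
      first
      | exact ⟨hne i j, by simp⟩
      | exact ⟨hne1 _ (hA i j), by simp⟩
      | exact ⟨hne1 _ hB, by simp⟩
  have hwt : wt d = ∏ i, ∏ j, F i j := rfl
  rw [hwt, MvPolynomial.degreeOf_prod_eq _ _ (fun i _ => Finset.prod_ne_zero_iff.2
    fun j _ => (hF i j).1), tileCount_sum, ← Finset.sum_add_distrib]
  have : ∀ i : Fin n, MvPolynomial.degreeOf Var.A (∏ j, F i j) +
      ∑ j, (if tile d i j = .blank then 1 else 0) = n := by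
    intro i
    rw [MvPolynomial.degreeOf_prod_eq _ _ (fun j _ => (hF i j).1), ← Finset.sum_add_distrib]
    simp [(hF i _).2]
  simp only [this]
  simp [sq]

theorem statement2 {n : ℕ} (hn : 1 ≤ n) (w : Equiv.Perm (Fin n)) (d : Pipes n)
    (hd : IsGPDof w d) :
    MvPolynomial.degreeOf Var.A (wt d) + tileCount d .blank = n ^ 2 ∧
    MvPolynomial.degreeOf Var.A (wt d) + invCount w ≤ n ^ 2 ∧
    (MvPolynomial.degreeOf Var.A (wt d) + invCount w = n ^ 2 ↔ IsBumplessReduced d) := by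
  have h1 := degree_eq d
  have h2 := blank_eq hd
  have h3 := cross_eq hd
  refine ⟨h1, by omega, ?_⟩
  have h4 : MvPolynomial.degreeOf Var.A (wt d) + invCount w = n ^ 2 ↔
      tileCount d .bump = 0 ∧ (∑ p, ∑ q, if p < q then C d q p else 0) = 0 := by omega
  rw [h4, IsBumplessReduced]
  refine and_congr ?_ ?_
  · simp [tileCount, Finset.filter_eq_empty_iff]
  · have h5 : (∑ p, ∑ q, if p < q then C d q p else 0) = 0 ↔
        ∀ p q : Fin n, p < q → C d q p = 0 := by
      simp [Finset.sum_eq_zero_iff]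
    rw [h5]
    constructor
    · intro h p q
      rcases lt_trichotomy p q with hpq | hpq | hpq
      · rw [crossCount_eq hpq.ne, C_inv hd hpq, h p q hpq]
        split_ifs <;> simp
      · subst hpq
        simp [crossCount, crossesAt_self hd.1]
      · rw [crossCount_eq hpq.ne', C_inv hd hpq, h q p hpq]
        split_ifs <;> simp
    · intro h p q hpq
      have := h p q
      rw [crossCount_eq hpq.ne, C_inv hd hpq] at this
      omega

end GPDpaper
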